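/- arXiv:1406.2440 — 2 statements merged into one kernel-verified Lean document; each statement's English description precedes it below -/
import Mathlib

section
/- For every finite simple graph G with at least one vertex, no isolated vertices, and maximum degree Δ = Δ(G) (so Δ ≥ 1), the induced matching number satisfies ν_s(G) ≥ n(G) / (2 · (2Δ² − 2Δ + 1)). -/
/-- A finset `M` of edges is an *induced matching* of `G` if every element of `M` is an
edge of `G`, no two distinct edges of `M` share an endvertex, and no edge of `G` joins
an endvertex of one edge of `M` to an endvertex of another edge of `M`. -/
def IsInducedMatching {V : Type*} (G : SimpleGraph V) (M : Finset (Sym2 V)) : Prop :=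
  (M : Set (Sym2 V)) ⊆ G.edgeSet ∧
    ∀ e ∈ M, ∀ f ∈ M, e ≠ f → ∀ x ∈ e, ∀ y ∈ f, x ≠ y ∧ ¬ G.Adj x y

/-- The induced (strong) matching number `ν_s(G)`: the maximum size of an induced matching. -/
noncomputable def indMatchNum {V : Type*} (G : SimpleGraph V) : ℕ :=
  sSup {n : ℕ | ∃ M : Finset (Sym2 V), IsInducedMatching G M ∧ M.card = n}

/-!
Take an inclusion-maximal induced matching `M`. Every edge of `G` conflicts with some edge of `M`,
that is, meets it or is joined to it by an edge. An edge other than `uv` that conflicts with `uv`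
has an endvertex in `(N(u) \ {v}) ∪ (N(v) \ {u})`, a set of at most `2(Δ - 1)` vertices, so at most
`2Δ(Δ - 1) + 1` edges conflict with `uv`. Hence `|E(G)| ≤ |M| (2Δ² - 2Δ + 1)`, and
`n(G) ≤ 2 |E(G)|` when no vertex is isolated.
-/

section EdgeConflict

variable {V : Type*} {G : SimpleGraph V} {M : Finset (Sym2 V)} {e f : Sym2 V}

/-- Two edges conflict when they share an endvertex or are joined by an edge of `G`: the obstruction
to both lying in an induced matching. Every edge conflicts with itself. -/
def EdgeConflict (G : SimpleGraph V) (e f : Sym2 V) : Prop :=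
  ∃ x ∈ e, ∃ y ∈ f, x = y ∨ G.Adj x y

theorem EdgeConflict.refl (G : SimpleGraph V) (e : Sym2 V) : EdgeConflict G e e :=
  ⟨_, e.out_fst_mem, _, e.out_fst_mem, Or.inl rfl⟩

theorem EdgeConflict.symm : EdgeConflict G e f → EdgeConflict G f e :=
  fun ⟨x, hx, y, hy, hxy⟩ => ⟨y, hy, x, hx, hxy.imp Eq.symm G.adj_symm⟩

theorem isInducedMatching_iff_pairwise_not_edgeConflict :
    IsInducedMatching G M ↔
      (M : Set (Sym2 V)) ⊆ G.edgeSet ∧ (M : Set (Sym2 V)).Pairwise (¬ EdgeConflict G · ·) := by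
  simp only [IsInducedMatching, EdgeConflict, Set.Pairwise, Finset.mem_coe, not_exists, not_and,
    not_or, ne_eq]

theorem IsInducedMatching.insert [DecidableEq V] (hM : IsInducedMatching G M)
    (he : e ∈ G.edgeSet) (hfree : ∀ f ∈ M, ¬ EdgeConflict G e f) :
    IsInducedMatching G (insert e M) := by
  rw [isInducedMatching_iff_pairwise_not_edgeConflict] at hM ⊢
  rw [Finset.coe_insert]
  exact ⟨Set.insert_subset he hM.1, hM.2.insert fun f hf _ =>
    ⟨hfree f hf, fun hfe => hfree f hf hfe.symm⟩⟩

theorem exists_edgeConflict_of_maximal (hM : Maximal (IsInducedMatching G) M)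
    (he : e ∈ G.edgeSet) : ∃ f ∈ M, EdgeConflict G e f := by
  classical
  by_contra! hfree
  have heM : e ∈ M :=
    hM.le_of_ge (hM.prop.insert he hfree) (Finset.subset_insert e M) (Finset.mem_insert_self e M)
  exact hfree e heM (.refl G e)

end EdgeConflict

section FiniteEdgeSet

variable {V : Type*} {G : SimpleGraph V} [Finite G.edgeSet]

theorem IsInducedMatching.card_le_indMatchNum {M : Finset (Sym2 V)} (hM : IsInducedMatching G M) :
    M.card ≤ indMatchNum G := by
  refine le_csSup ⟨G.edgeSet.ncard, ?_⟩ ⟨M, hM, rfl⟩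
  rintro _ ⟨N, hN, rfl⟩
  rw [← Set.ncard_coe_finset]
  exact Set.ncard_le_ncard hN.1

variable (G) in
theorem exists_maximal_isInducedMatching : ∃ M, Maximal (IsInducedMatching G) M := by
  have hfin : {M | IsInducedMatching G M}.Finite :=
    (G.edgeSet.toFinite.finite_subsets.preimage Finset.coe_injective.injOn).subset
      fun _ hM => hM.1
  exact hfin.exists_maximal ⟨∅, by simp [IsInducedMatching]⟩

end FiniteEdgeSet

section Counting

variable {V : Type*} {G : SimpleGraph V} [G.LocallyFinite] {u v : V} {d : ℕ}

variable (G u v) in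
/-- The set `(N(u) \ {v}) ∪ (N(v) \ {u})`, which for adjacent `u` and `v` consists of the vertices
outside the edge `uv` that are adjacent to one of its ends. Every edge other than `uv` that
conflicts with `uv` has an end in it. -/
def edgeNeighborFinset [DecidableEq V] : Finset V :=
  (G.neighborFinset u).erase v ∪ (G.neighborFinset v).erase u

theorem card_edgeNeighborFinset_le [DecidableEq V] (huv : G.Adj u v) :
    (edgeNeighborFinset G u v).card ≤ (G.degree u - 1) + (G.degree v - 1) := by
  refine (Finset.card_union_le _ _).trans_eq ?_
  rw [Finset.card_erase_of_mem ((G.mem_neighborFinset u v).2 huv),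
    Finset.card_erase_of_mem ((G.mem_neighborFinset v u).2 huv.symm),
    G.card_neighborFinset_eq_degree, G.card_neighborFinset_eq_degree]

theorem EdgeConflict.eq_or_exists_mem_edgeNeighborFinset [DecidableEq V] {e : Sym2 V}
    (he : e ∈ G.edgeSet) (hconf : EdgeConflict G e s(u, v)) :
    e = s(u, v) ∨ ∃ w ∈ edgeNeighborFinset G u v, w ∈ e := by
  obtain ⟨x, ⟨z, rfl⟩, y, hy, hxy⟩ := hconf
  have hxz : G.Adj x z := he
  simp only [edgeNeighborFinset, Finset.mem_union, Finset.mem_erase, SimpleGraph.mem_neighborFinset,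
    Sym2.mem_iff] at hy ⊢
  -- If `x` does not qualify as `w`, then `x` is `u` or `v`, and `z` qualifies unless `xz = uv`.
  grind [G.adj_comm]

theorem card_le_of_forall_edgeConflict (hd : ∀ w, G.degree w ≤ d) {f : Sym2 V}
    (hf : f ∈ G.edgeSet) {s : Finset (Sym2 V)}
    (hs : ∀ e ∈ s, e ∈ G.edgeSet ∧ EdgeConflict G e f) :
    s.card ≤ 2 * (d * (d - 1)) + 1 := by
  classical
  induction f using Sym2.ind with | h u v =>
  have hsub : s ⊆ insert s(u, v) ((edgeNeighborFinset G u v).biUnion (G.incidenceFinset ·)) := by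
    intro e he
    obtain ⟨heG, hconf⟩ := hs e he
    simp only [Finset.mem_insert, Finset.mem_biUnion, SimpleGraph.mem_incidenceFinset]
    exact (hconf.eq_or_exists_mem_edgeNeighborFinset heG).imp_right
      fun ⟨w, hw, hwe⟩ => ⟨w, hw, heG, hwe⟩
  have hincidence : ((edgeNeighborFinset G u v).biUnion (G.incidenceFinset ·)).card ≤
      (edgeNeighborFinset G u v).card * d :=
    Finset.card_biUnion_le_card_mul _ _ d fun w _ =>
      (G.card_incidenceFinset_eq_degree w).trans_le (hd w)
  have hneighbors : (edgeNeighborFinset G u v).card ≤ 2 * (d - 1) := by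
    rw [two_mul]
    exact (card_edgeNeighborFinset_le hf).trans
      (add_le_add (Nat.sub_le_sub_right (hd u) 1) (Nat.sub_le_sub_right (hd v) 1))
  calc s.card
      ≤ ((edgeNeighborFinset G u v).biUnion (G.incidenceFinset ·)).card + 1 :=
        (Finset.card_le_card hsub).trans (Finset.card_insert_le _ _)
    _ ≤ 2 * (d - 1) * d + 1 := by grw [hincidence, hneighbors]
    _ = 2 * (d * (d - 1)) + 1 := by ring

theorem card_edgeFinset_le_of_maximal [Fintype G.edgeSet] (hd : ∀ w, G.degree w ≤ d)
    {M : Finset (Sym2 V)} (hM : Maximal (IsInducedMatching G) M) :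
    G.edgeFinset.card ≤ M.card * (2 * (d * (d - 1)) + 1) := by
  classical
  have hcover : G.edgeFinset ⊆ M.biUnion fun f => {e ∈ G.edgeFinset | EdgeConflict G e f} := by
    intro e he
    obtain ⟨f, hfM, hef⟩ := exists_edgeConflict_of_maximal hM (G.mem_edgeFinset.1 he)
    exact Finset.mem_biUnion.2 ⟨f, hfM, Finset.mem_filter.2 ⟨he, hef⟩⟩
  refine (Finset.card_le_card hcover).trans (Finset.card_biUnion_le_card_mul _ _ _ fun f hfM => ?_)
  refine card_le_of_forall_edgeConflict hd (hM.prop.1 hfM) fun e he => ?_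
  rwa [Finset.mem_filter, G.mem_edgeFinset] at he

theorem card_edgeFinset_le_indMatchNum_mul [Fintype G.edgeSet] (hd : ∀ w, G.degree w ≤ d) :
    G.edgeFinset.card ≤ indMatchNum G * (2 * (d * (d - 1)) + 1) := by
  obtain ⟨M, hM⟩ := exists_maximal_isInducedMatching G
  exact (card_edgeFinset_le_of_maximal hd hM).trans
    (Nat.mul_le_mul_right _ hM.prop.card_le_indMatchNum)

end Counting

theorem card_le_two_mul_card_edgeFinset {V : Type*} [Fintype V] {G : SimpleGraph V}
    [DecidableRel G.Adj] (hdeg : ∀ v, 0 < G.degree v) :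
    Fintype.card V ≤ 2 * G.edgeFinset.card := by
  rw [← G.sum_degrees_eq_twice_card_edges, Fintype.card_eq_sum_ones]
  exact Finset.sum_le_sum fun v _ => hdeg v

/-- The greedy bound: for every graph `G` with at least one vertex, without isolated
vertices, and with maximum degree `Δ` (so `Δ ≥ 1`),
`ν_s(G) ≥ n(G) / (2(2Δ² − 2Δ + 1))`. -/
theorem indMatchNum_ge_greedy_bound :
    ∀ (V : Type) [Fintype V] [DecidableEq V] (G : SimpleGraph V) [DecidableRel G.Adj],
      Nonempty V →
      (∀ v : V, 0 < G.degree v) →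
      (Fintype.card V : ℚ) /
          (2 * (2 * (G.maxDegree : ℚ) ^ 2 - 2 * (G.maxDegree : ℚ) + 1))
        ≤ (indMatchNum G : ℚ) := by
  intro V _ _ G _ ⟨v⟩ hdeg
  have hΔ : 1 ≤ G.maxDegree := (hdeg v).trans_le (G.degree_le_maxDegree v)
  have hcard : Fintype.card V ≤
      2 * (indMatchNum G * (2 * (G.maxDegree * (G.maxDegree - 1)) + 1)) :=
    (card_le_two_mul_card_edgeFinset hdeg).trans
      (Nat.mul_le_mul_left 2 (card_edgeFinset_le_indMatchNum_mul G.degree_le_maxDegree))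
  have hpos : (0 : ℚ) < 2 * (2 * (G.maxDegree : ℚ) ^ 2 - 2 * (G.maxDegree : ℚ) + 1) := by
    linarith [sq_nonneg (2 * (G.maxDegree : ℚ) - 1)]
  rw [div_le_iff₀ hpos]
  calc (Fintype.card V : ℚ)
      ≤ 2 * (indMatchNum G * (2 * (G.maxDegree * ((G.maxDegree : ℚ) - 1)) + 1)) :=
        mod_cast hcard
    _ = indMatchNum G * (2 * (2 * (G.maxDegree : ℚ) ^ 2 - 2 * G.maxDegree + 1)) := by ring
end

section
/- Let C₅² be the graph obtained from the 5-cycle by replacing every vertex by an independent set of order 2; concretely, its vertex set is {0,1,2,3,4} × {0,1}, with (i,a) adjacent to (j,b) if and only if j ≡ i + 1 (mod 5) or j ≡ i − 1 (mod 5). Then C₅² is connected, has maximum degree 4, n(C₅²) = 10, and ν_s(C₅²) = 1; in particular ν_s(C₅²) < n(C₅²)/((⌈4/2⌉+1)(⌊4/2⌋+1)) = 10/9, so the bound ν_s(G) ≥ n(G)/((⌈Δ/2⌉+1)(⌊Δ/2⌋+1)) fails for C₅². -/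
/-- `C₅²`: the 5-cycle with every vertex replaced by an independent set of order 2.
Vertices are pairs `(i, a)` with `i : ZMod 5`, `a : Fin 2`, and `(i, a)` is adjacent
to `(j, b)` iff `j = i + 1` or `j = i - 1` (equivalently `i = j + 1`). -/
def C5sq : SimpleGraph (ZMod 5 × Fin 2) :=
  SimpleGraph.fromRel (fun p q => q.1 = p.1 + 1)

instance : DecidableRel C5sq.Adj := fun p q =>
  inferInstanceAs (Decidable (p ≠ q ∧ (q.1 = p.1 + 1 ∨ p.1 = q.1 + 1)))

/-!
A graph with an edge and without an induced `2K₂` has induced matching number 1, and replacing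
every vertex by an independent set of order `k` creates no induced `2K₂` while multiplying all
degrees by `k`. In the 5-cycle, the endvertices of an edge are adjacent to every vertex but the
one opposite the edge; any other edge has an endvertex besides that one, so the 5-cycle has no
induced `2K₂`.
-/

open SimpleGraph

/-- The blow-up of `G` replacing every vertex by an independent set indexed by `W`; the graph `G²`
of the paper is `blowUp G (Fin 2)`. -/
abbrev blowUp {V : Type*} (G : SimpleGraph V) (W : Type*) : SimpleGraph (V × W) :=
  G.comap Prod.fst

/-- `G` is `2K₂`-free: it has no induced matching with two edges. The edges `ab` and `cd` need not
be disjoint, since two edges sharing an endvertex satisfy the condition anyway. -/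
def IsTwoK2Free {V : Type*} (G : SimpleGraph V) : Prop :=
  ∀ ⦃a b c d : V⦄, G.Adj a b → G.Adj c d → G.Adj a c ∨ G.Adj a d ∨ G.Adj b c ∨ G.Adj b d

variable {V W : Type*} {G : SimpleGraph V}

theorem isInducedMatching_singleton {e : Sym2 V} (he : e ∈ G.edgeSet) :
    IsInducedMatching G {e} := by
  refine ⟨by simpa using he, fun f hf g hg hfg => absurd ?_ hfg⟩
  rw [Finset.mem_singleton.1 hf, Finset.mem_singleton.1 hg]

namespace IsTwoK2Free

theorem card_le_one_of_isInducedMatching (hG : IsTwoK2Free G) {M : Finset (Sym2 V)}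
    (hM : IsInducedMatching G M) : M.card ≤ 1 := by
  refine Finset.card_le_one.2 fun e he f hf => ?_
  by_contra hef
  have not_adj : ∀ x ∈ e, ∀ y ∈ f, ¬ G.Adj x y := fun x hx y hy =>
    (hM.2 e he f hf hef x hx y hy).2
  have e_edge : e ∈ G.edgeSet := hM.1 he
  have f_edge : f ∈ G.edgeSet := hM.1 hf
  induction e with | _ a b
  induction f with | _ c d
  rcases hG e_edge f_edge with h | h | h | h
  · exact not_adj a (Sym2.mem_mk_left a b) c (Sym2.mem_mk_left c d) h
  · exact not_adj a (Sym2.mem_mk_left a b) d (Sym2.mem_mk_right c d) h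
  · exact not_adj b (Sym2.mem_mk_right a b) c (Sym2.mem_mk_left c d) h
  · exact not_adj b (Sym2.mem_mk_right a b) d (Sym2.mem_mk_right c d) h

theorem indMatchNum_eq_one (hG : IsTwoK2Free G) (hne : G ≠ ⊥) : indMatchNum G = 1 := by
  obtain ⟨e, he⟩ := edgeSet_nonempty.2 hne
  refine IsGreatest.csSup_eq
    ⟨⟨{e}, isInducedMatching_singleton he, Finset.card_singleton e⟩, ?_⟩
  rintro _ ⟨M, hM, rfl⟩
  exact hG.card_le_one_of_isInducedMatching hM

theorem comap (hG : IsTwoK2Free G) (f : W → V) : IsTwoK2Free (G.comap f) :=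
  fun _ _ _ _ hab hcd => hG hab hcd

end IsTwoK2Free

theorem degree_blowUp [Fintype W] (p : V × W) [Fintype (G.neighborSet p.1)]
    [Fintype ((blowUp G W).neighborSet p)] :
    (blowUp G W).degree p = G.degree p.1 * Fintype.card W := by
  have neighbors : (blowUp G W).neighborFinset p = G.neighborFinset p.1 ×ˢ Finset.univ := by
    ext q
    simp
  rw [degree, neighbors, Finset.card_product, card_neighborFinset_eq_degree, Finset.card_univ]

theorem isRegularOfDegree_blowUp [Fintype W] [LocallyFinite G] [LocallyFinite (blowUp G W)]
    {d : ℕ} (hG : G.IsRegularOfDegree d) :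
    (blowUp G W).IsRegularOfDegree (d * Fintype.card W) :=
  fun p => by rw [degree_blowUp, hG.degree_eq]

theorem connected_blowUp [Nontrivial V] [Nonempty W] (hG : G.Connected) :
    (blowUp G W).Connected := by
  refine ⟨?_⟩
  rintro ⟨a, x⟩ ⟨b, y⟩
  obtain ⟨c, hbc⟩ := hG.preconnected.exists_adj_of_nontrivial b
  let layer : G →g blowUp G W := ⟨fun v => (v, x), id⟩
  have within_layer : (blowUp G W).Reachable (a, x) (b, x) := (hG a b).map layer
  have hxc : (blowUp G W).Adj (b, x) (c, x) := hbc
  have hcy : (blowUp G W).Adj (c, x) (b, y) := hbc.symm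
  exact within_layer.trans (hxc.reachable.trans hcy.reachable)

/-- The 5-cycle on the residues modulo 5. Unlike `cycleGraph 5`, whose vertex type is `Fin 5`, it
has blow-ups on the vertex type of `C5sq`. -/
abbrev C5 : SimpleGraph (ZMod 5) :=
  circulantGraph {1}

theorem connected_C5 : C5.Connected := by
  have h : (circulantGraph {(1 : Fin 5)}).Connected :=
    cycleGraph_eq_circulantGraph 4 ▸ cycleGraph_connected
  -- `ZMod 5` unfolds to `Fin 5`.
  exact h

theorem isRegularOfDegree_C5 : C5.IsRegularOfDegree 2 := by
  intro v
  revert v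
  decide

-- Since `3 = 1 / 2` modulo 5, `3 * (a + b)` is the vertex opposite the edge `ab`.
theorem eq_of_not_adj_edge_C5 {a b c : ZMod 5} (hab : C5.Adj a b)
    (hac : ¬ C5.Adj a c) (hbc : ¬ C5.Adj b c) : c = 3 * (a + b) := by
  revert a b c
  decide

theorem isTwoK2Free_C5 : IsTwoK2Free C5 := by
  intro a b c d hab hcd
  by_contra! h
  obtain ⟨hac, had, hbc, hbd⟩ := h
  have hc : c = 3 * (a + b) := eq_of_not_adj_edge_C5 hab hac hbc
  have hd : d = 3 * (a + b) := eq_of_not_adj_edge_C5 hab had hbd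
  exact hcd.ne (hc.trans hd.symm)

theorem C5sq_eq_blowUp : C5sq = blowUp C5 (Fin 2) := by
  have ne_add_one : ∀ i : ZMod 5, i ≠ i + 1 := by decide
  ext p q
  simp only [C5sq, fromRel_adj, comap_adj, circulantGraph_adj, Set.mem_singleton_iff,
    sub_eq_iff_eq_add']
  grind

theorem connected_C5sq : C5sq.Connected := by
  have : Nontrivial (ZMod 5) := ⟨0, 1, by decide⟩
  rw [C5sq_eq_blowUp]
  exact connected_blowUp connected_C5

theorem isRegularOfDegree_C5sq : C5sq.IsRegularOfDegree 4 := by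
  convert isRegularOfDegree_blowUp (W := Fin 2) isRegularOfDegree_C5
  · exact C5sq_eq_blowUp
  · rw [Fintype.card_fin]

theorem indMatchNum_C5sq : indMatchNum C5sq = 1 := by
  have adj : C5sq.Adj (0, 0) (1, 0) := by decide
  have free : IsTwoK2Free C5sq := C5sq_eq_blowUp ▸ isTwoK2Free_C5.comap Prod.fst
  exact free.indMatchNum_eq_one (ne_bot_iff_exists_adj.2 ⟨_, _, adj⟩)

/-- `C₅²` is connected, has maximum degree `4`, `10` vertices, and induced matching
number `1`; in particular `ν_s(C₅²) < n(C₅²)/((⌈4/2⌉+1)(⌊4/2⌋+1)) = 10/9`, so the bound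
`ν_s(G) ≥ n(G)/((⌈Δ/2⌉+1)(⌊Δ/2⌋+1))` fails for `C₅²`. -/
theorem C5sq_counterexample :
    C5sq.Connected ∧
    C5sq.maxDegree = 4 ∧
    Fintype.card (ZMod 5 × Fin 2) = 10 ∧
    indMatchNum C5sq = 1 ∧
    (indMatchNum C5sq : ℚ) <
      (Fintype.card (ZMod 5 × Fin 2) : ℚ) /
        (((⌈(4 : ℚ) / 2⌉ : ℚ) + 1) * ((⌊(4 : ℚ) / 2⌋ : ℚ) + 1)) := by
  have card : Fintype.card (ZMod 5 × Fin 2) = 10 := by simp [ZMod.card]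
  refine ⟨connected_C5sq, isRegularOfDegree_C5sq.maxDegree_eq, card, indMatchNum_C5sq, ?_⟩
  rw [indMatchNum_C5sq, card]
  norm_num
end
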